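/- Let W be an infinite-dimensional real vector space and let p : W → ℝ be a norm (a seminorm with p x = 0 implying x = 0). Then p is not continuous with respect to the strongest weak topology on W. Consequently, on an infinite-dimensional real normed space the norm function is not continuous for the weak topology induced by all (not necessarily norm-continuous) linear functionals. -/

import Mathlib

/-!
A weak neighbourhood of `0` is cut out by finitely many linear functionals, so it contains their
common kernel. When `W` is infinite-dimensional that kernel has a nonzero vector `x`, and hence the
neighbourhood contains the whole line through `x`. A norm is unbounded on that line, so no weak
neighbourhood of `0` fits inside the unit ball `{p < 1}`.
-/

/-- Finitely many linear functionals on an infinite-dimensional space have a common nonzero zero. -/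
lemma exists_ne_zero_forall_dual_eq_zero {W : Type*} [AddCommGroup W] [Module ℝ W]
    (h : ¬ FiniteDimensional ℝ W) (s : Finset (Module.Dual ℝ W)) :
    ∃ x : W, x ≠ 0 ∧ ∀ f ∈ s, f x = 0 := by
  by_contra! hc
  let T : W →ₗ[ℝ] (s → ℝ) := LinearMap.pi fun f => f.1
  refine h (FiniteDimensional.of_injective T ((injective_iff_map_eq_zero T).2 fun x hx => ?_))
  by_contra hx0
  obtain ⟨f, hf, hfx⟩ := hc x hx0
  exact hfx (congrFun hx ⟨f, hf⟩)

/-- If `W` is an infinite-dimensional real vector space and `p` is a norm on `W`,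
then `p` is not continuous with respect to the strongest weak topology on `W`. -/
theorem norm_not_continuous_strongestWeakTopology (W : Type*) [AddCommGroup W] [Module ℝ W]
    (h : ¬ FiniteDimensional ℝ W) (p : Seminorm ℝ W) (hp : ∀ x : W, p x = 0 → x = 0) :
    ¬ Continuous (fun x : WeakBilin (Module.dualPairing ℝ W).flip => p x) := by
  intro hc
  have hU : {x : WeakBilin (Module.dualPairing ℝ W).flip | p x < 1} ∈
      nhds (0 : WeakBilin (Module.dualPairing ℝ W).flip) :=
    (isOpen_lt hc continuous_const).mem_nhds
      (show p (0 : W) < 1 by rw [map_zero]; exact one_pos)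
  obtain ⟨s, r, hr, hs⟩ :=
    ((LinearMap.weakBilin_withSeminorms (Module.dualPairing ℝ W).flip).mem_nhds_iff _ _).1 hU
  obtain ⟨x, hx0, hx⟩ := exists_ne_zero_forall_dual_eq_zero h s
  have hpx : p x ≠ 0 := fun h0 => hx0 (hp x h0)
  -- The vector of norm exactly `1` on the line through `x`.
  have hmem : (p x)⁻¹ • x ∈ {x : W | p x < 1} := by
    refine hs ((Seminorm.mem_ball_zero _).2 ?_)
    refine Seminorm.finset_sup_apply_lt hr fun f hf => ?_
    have hfx : f ((p x)⁻¹ • x) = 0 := by rw [map_smul, hx f hf, smul_zero]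
    change ‖f ((p x)⁻¹ • x)‖ < r
    rwa [hfx, norm_zero]
  have h1 : p ((p x)⁻¹ • x) = 1 := by
    rw [map_smul_eq_mul, norm_inv, Real.norm_of_nonneg (apply_nonneg p x), inv_mul_cancel₀ hpx]
  exact (show p ((p x)⁻¹ • x) < 1 from hmem).ne h1
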